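/- (Uniqueness of Fuchsian systems with prescribed monodromy, normalized case) Let A(x) = Σᵢ Aᵢ/(x - tᵢ) and B(x) = Σᵢ Bᵢ/(x - tᵢ) be two 2×2 Fuchsian systems with the same distinct singularities, such that for each i the matrices Aᵢ and Bᵢ have the same eigenvalues (θᵢ⁺, θᵢ⁻) with θᵢ⁺ - θᵢ⁻ ∉ ℤ, both residues at infinity A_∞ = -Σ Aᵢ and B_∞ = -Σ Bᵢ are diagonal with the same (distinct) eigenvalues, and the two systems have the same monodromy representation. Then there exists ξ ∈ ℂ* such that B(x) = C·A(x)·C⁻¹ where C = diag(1, ξ) or C = ![![0,1],![ξ,0]]. -/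

import Mathlib

open Matrix Polynomial

attribute [local instance] Matrix.normedAddCommGroup Matrix.normedSpace

/-!
Where both fundamental matrices are defined, `F = Z * Y⁻¹` solves `F' = B(x) F - F A(x)`; equality
of the monodromies makes `F` single-valued, so it solves this linear Fuchsian equation off the
singularities. Near each singularity, and at infinity, `F` has moderate growth by Grönwall's
inequality along rays, hence is meromorphic, and its order is an integer eigenvalue of the residue
`V ↦ Bᵢ V - V Aᵢ`. Such an eigenvalue is a difference of exponents, so nonresonance forces the
order to be `0`. Therefore `F` extends to an entire function with a limit at infinity, a constant
`V` by Liouville, and `Bᵢ V = V Aᵢ` for all `i`. Summing over `i`, `V` intertwines the diagonal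
residues at infinity, whose entries are distinct, so `V` is a monomial matrix.
-/

section RegularSingularPoint

open Filter Topology Asymptotics Module.End

theorem norm_le_mul_rpow_neg_of_mul_norm_deriv_le {E : Type*} [NormedAddCommGroup E]
    [NormedSpace ℝ E] {f f' : ℝ → E} {K r : ℝ} (hf : ∀ s ∈ Set.Ioc 0 1, HasDerivAt f (f' s) s)
    (hK : ∀ s ∈ Set.Ioc 0 1, s * ‖f' s‖ ≤ K * ‖f s‖) (hr : r ∈ Set.Ioc 0 1) :
    ‖f r‖ ≤ ‖f 1‖ * r ^ (-K) := by
  -- In the variable `u = -log s` the bound reads `‖g'‖ ≤ K * ‖g‖`, as in Grönwall's inequality.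
  have exp_mem : ∀ u : ℝ, 0 ≤ u → Real.exp (-u) ∈ Set.Ioc 0 1 := fun u hu ↦
    ⟨Real.exp_pos _, Real.exp_le_one_iff.2 (neg_nonpos.2 hu)⟩
  have hderiv : ∀ u : ℝ, 0 ≤ u →
      HasDerivAt (fun u ↦ f (Real.exp (-u))) (-Real.exp (-u) • f' (Real.exp (-u))) u := fun u hu ↦
    (hf _ (exp_mem u hu)).scomp u (by simpa using (hasDerivAt_neg u).exp)
  have hgronwall := norm_le_gronwallBound_of_norm_deriv_right_le (δ := ‖f 1‖) (K := K) (ε := 0)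
    (fun u hu ↦ (hderiv u hu.1).continuousAt.continuousWithinAt)
    (fun u hu ↦ (hderiv u hu.1).hasDerivWithinAt) (by simp)
    (fun u hu ↦ by simpa [norm_smul] using hK _ (exp_mem u hu.1))
    (-Real.log r) ⟨neg_nonneg.2 (Real.log_nonpos hr.1.le hr.2), le_rfl⟩
  have hpow : r ^ (-K) = Real.exp (K * -Real.log r) := by
    rw [Real.rpow_def_of_pos hr.1, mul_neg, mul_neg, mul_comm]
  rwa [gronwallBound_ε0, neg_neg, Real.exp_log hr.1, sub_zero, ← hpow] at hgronwall

variable {E : Type*} [NormedAddCommGroup E] [NormedSpace ℂ E] {t : ℂ} {F F' : ℂ → E}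

theorem norm_le_mul_rpow_neg_of_norm_sub_smul_deriv_le {ρ K M : ℝ}
    (hF : ∀ z ∈ Metric.closedBall t ρ \ {t}, HasDerivAt F (F' z) z)
    (hK : ∀ z ∈ Metric.closedBall t ρ \ {t}, ‖(z - t) • F' z‖ ≤ K * ‖F z‖)
    (hM : ∀ z ∈ Metric.sphere t ρ, ‖F z‖ ≤ M) {z : ℂ} (hz : z ∈ Metric.closedBall t ρ \ {t}) :
    ‖F z‖ ≤ M * (‖z - t‖ / ρ) ^ (-K) := by
  have hzt : 0 < ‖z - t‖ := norm_pos_iff.2 (sub_ne_zero.2 hz.2)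
  have hzρ : ‖z - t‖ ≤ ρ := mem_closedBall_iff_norm.1 hz.1
  have hρ : 0 < ρ := hzt.trans_le hzρ
  set r : ℝ := ‖z - t‖ / ρ with hr
  have hr0 : 0 < r := by positivity
  set w : ℂ := r⁻¹ • (z - t) with hw
  have hw_norm : ‖w‖ = ρ := by
    rw [hw, norm_smul, Real.norm_of_nonneg (by positivity), hr]
    field_simp
  have hray : ∀ s ∈ Set.Ioc (0 : ℝ) 1, t + s • w ∈ Metric.closedBall t ρ \ {t} := by
    refine fun s hs ↦ ⟨?_, ?_⟩
    · rw [mem_closedBall_iff_norm, add_sub_cancel_left, norm_smul, hw_norm,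
        Real.norm_of_nonneg hs.1.le]
      exact mul_le_of_le_one_left hρ.le hs.2
    · have hw0 : w ≠ 0 := norm_pos_iff.1 (hw_norm ▸ hρ)
      simpa using ⟨hs.1.ne', hw0⟩
  have hbound := norm_le_mul_rpow_neg_of_mul_norm_deriv_le (f := fun s : ℝ ↦ F (t + s • w))
    (f' := fun s ↦ w • F' (t + s • w)) (K := K) (r := r)
    (fun s hs ↦ (hF _ (hray s hs)).scomp s
      (by simpa using ((hasDerivAt_id s).smul_const w).const_add t))
    (fun s hs ↦ by simpa [norm_smul, mul_assoc, abs_of_pos hs.1] using hK _ (hray s hs))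
    ⟨hr0, (div_le_one hρ).2 hzρ⟩
  calc
    ‖F z‖ = ‖F (t + r • w)‖ := by rw [hw, smul_inv_smul₀ hr0.ne', add_sub_cancel]
    _ ≤ ‖F (t + (1 : ℝ) • w)‖ * r ^ (-K) := hbound
    _ ≤ M * r ^ (-K) := by
      gcongr
      exact hM _ (by simp [mem_sphere_iff_norm, hw_norm])

theorem exists_isBigO_inv_pow_of_sub_smul_deriv_isBigO
    (hF : ∀ᶠ z in 𝓝[≠] t, HasDerivAt F (F' z) z)
    (hF' : (fun z ↦ (z - t) • F' z) =O[𝓝[≠] t] F) :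
    ∃ N : ℕ, F =O[𝓝[≠] t] fun z ↦ ((z - t) ^ N)⁻¹ := by
  obtain ⟨K, hK⟩ := hF'.bound
  obtain ⟨N, hKN⟩ := exists_nat_ge K
  have hbasis := nhdsWithin_hasBasis (Metric.nhds_basis_closedBall (x := t)) {t}ᶜ
  obtain ⟨ρ, hρ, hball⟩ := hbasis.eventually_iff.1 (hF.and hK)
  obtain ⟨M, hM⟩ := (isCompact_sphere t ρ).exists_bound_of_continuousOn fun z hz ↦
    (hball ⟨Metric.sphere_subset_closedBall hz,
      Metric.ne_of_mem_sphere hz hρ.ne'⟩).1.continuousAt.continuousWithinAt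
  refine ⟨N, IsBigO.of_bound (M * ρ ^ N) ?_⟩
  filter_upwards [hbasis.mem_of_mem hρ] with z hz
  calc
    ‖F z‖ ≤ M * (‖z - t‖ / ρ) ^ (-N : ℝ) :=
      norm_le_mul_rpow_neg_of_norm_sub_smul_deriv_le (fun z hz ↦ (hball hz).1)
        (fun z hz ↦ (hball hz).2.trans (by gcongr)) hM hz
    _ = M * ρ ^ N * ‖((z - t) ^ N)⁻¹‖ := by
      rw [Real.rpow_neg (by positivity), Real.rpow_natCast, norm_inv, norm_pow, div_pow, inv_div,
        div_eq_mul_inv, mul_assoc]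

theorem hasDerivAt_zpow_sub_smul {𝕜 E : Type*} [NontriviallyNormedField 𝕜]
    [NormedAddCommGroup E] [NormedSpace 𝕜 E] {g : 𝕜 → E} {t z : 𝕜} (hz : z ≠ t) (k : ℤ)
    (hg : DifferentiableAt 𝕜 g z) :
    HasDerivAt (fun z ↦ (z - t) ^ k • g z)
      ((z - t) ^ (k - 1) • ((k : 𝕜) • g z + (z - t) • deriv g z)) z := by
  have hz' : z - t ≠ 0 := sub_ne_zero.2 hz
  have hpow : HasDerivAt (fun z ↦ (z - t) ^ k) (k * (z - t) ^ (k - 1)) z :=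
    (hasDerivAt_zpow k (z - t) (Or.inl hz')).comp_sub_const z t
  refine (hpow.smul hg.hasDerivAt).congr_deriv ?_
  rw [smul_add, smul_smul, smul_smul, zpow_sub_one₀ hz', inv_mul_cancel_right₀ hz', add_comm,
    mul_comm]

variable [CompleteSpace E]

theorem meromorphicAt_of_isBigO_inv_pow {N : ℕ} (hF : ∀ᶠ z in 𝓝[≠] t, DifferentiableAt ℂ F z)
    (hO : F =O[𝓝[≠] t] fun z ↦ ((z - t) ^ N)⁻¹) : MeromorphicAt F t := by
  refine ⟨N + 1, Complex.analyticAt_of_differentiable_on_punctured_nhds_of_continuousAt ?_ ?_⟩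
  · filter_upwards [hF] with z hz
    fun_prop
  · rw [continuousAt_iff_punctured_nhds, sub_self, zero_pow N.succ_ne_zero, zero_smul]
    have hO' : (fun z ↦ (z - t) ^ (N + 1) • F z) =O[𝓝[≠] t] fun z ↦ z - t := by
      refine ((isBigO_refl (fun z ↦ (z - t) ^ (N + 1)) _).smul hO).congr' .rfl ?_
      filter_upwards [self_mem_nhdsWithin] with z hz
      have : z - t ≠ 0 := sub_ne_zero.2 hz
      rw [smul_eq_mul, pow_succ']
      field_simp
    refine hO'.trans_tendsto (tendsto_nhdsWithin_of_tendsto_nhds ?_)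
    exact (continuous_sub_right t).tendsto' _ _ (sub_self t)

variable {M : ℂ → E →L[ℂ] E} {R : E →L[ℂ] E}

theorem meromorphicAt_of_hasDerivAt_of_tendsto_sub_smul
    (hF : ∀ᶠ z in 𝓝[≠] t, HasDerivAt F (M z (F z)) z)
    (hM : Tendsto (fun z ↦ (z - t) • M z) (𝓝[≠] t) (𝓝 R)) : MeromorphicAt F t := by
  have hO : (fun z ↦ (z - t) • M z (F z)) =O[𝓝[≠] t] F := by
    obtain ⟨c, hc⟩ := (hM.isBigO_one ℝ).bound
    refine IsBigO.of_bound c ?_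
    filter_upwards [hc] with z hz
    rw [norm_one, mul_one] at hz
    exact ((z - t) • M z).le_of_opNorm_le hz (F z)
  obtain ⟨N, hN⟩ := exists_isBigO_inv_pow_of_sub_smul_deriv_isBigO hF hO
  exact meromorphicAt_of_isBigO_inv_pow (hF.mono fun z hz ↦ hz.differentiableAt) hN

theorem hasEigenvalue_meromorphicOrderAt_untop₀ (hF : ∀ᶠ z in 𝓝[≠] t, HasDerivAt F (M z (F z)) z)
    (hM : Tendsto (fun z ↦ (z - t) • M z) (𝓝[≠] t) (𝓝 R)) (htop : meromorphicOrderAt F t ≠ ⊤) :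
    HasEigenvalue (R : E →ₗ[ℂ] E) ((meromorphicOrderAt F t).untop₀ : ℂ) := by
  obtain ⟨g, hg, hg0, hFg⟩ := (meromorphicOrderAt_ne_top_iff
    (meromorphicAt_of_hasDerivAt_of_tendsto_sub_smul hF hM)).1 htop
  set k : ℤ := (meromorphicOrderAt F t).untop₀
  -- Substituting `F z = (z - t) ^ k • g z` and letting `z → t` leaves `k • g t = R (g t)`.
  have hode : ∀ᶠ z in 𝓝[≠] t, (k : ℂ) • g z + (z - t) • deriv g z = ((z - t) • M z) (g z) := by
    filter_upwards [hF, eventually_nhdsNE_eventually_nhds_iff.2 hFg,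
      nhdsWithin_le_nhds hg.eventually_analyticAt, self_mem_nhdsWithin] with z hFz hFgz hgz hzt
    have hz : z - t ≠ 0 := sub_ne_zero.2 hzt
    have hderiv := hFz.unique <|
      (hasDerivAt_zpow_sub_smul hzt k hgz.differentiableAt).congr_of_eventuallyEq hFgz
    rw [hFgz.self_of_nhds, map_smul, ← inv_smul_eq_iff₀ (zpow_ne_zero _ hz), smul_smul,
      zpow_sub_one₀ hz, mul_inv, inv_inv, mul_right_comm, inv_mul_cancel₀ (zpow_ne_zero _ hz),
      one_mul] at hderiv
    exact hderiv.symm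
  have hleft : Tendsto (fun z ↦ (k : ℂ) • g z + (z - t) • deriv g z) (𝓝[≠] t)
      (𝓝 ((k : ℂ) • g t)) := by
    have := hg.continuousAt
    have := hg.deriv.continuousAt
    have hcont : ContinuousAt (fun z ↦ (k : ℂ) • g z + (z - t) • deriv g z) t := by fun_prop
    simpa using hcont.tendsto.mono_left nhdsWithin_le_nhds
  have hright : Tendsto (fun z ↦ ((z - t) • M z) (g z)) (𝓝[≠] t) (𝓝 (R (g t))) :=
    (isBoundedBilinearMap_apply.continuous.tendsto (R, g t)).comp
      (hM.prodMk_nhds (hg.continuousAt.tendsto.mono_left nhdsWithin_le_nhds))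
  exact hasEigenvalue_of_hasEigenvector
    ⟨mem_eigenspace_iff.2 (tendsto_nhds_unique hright (hleft.congr' hode)), hg0⟩

end RegularSingularPoint

section Nonresonant

open Filter Topology Module.End

variable {E : Type*} [NormedAddCommGroup E] [NormedSpace ℂ E]

/-- A residue operator is nonresonant when it has no nonzero integer eigenvalue. The eigenvalue `0`
is allowed: it belongs to solutions that are holomorphic and nonvanishing at the singularity. -/
def Nonresonant (R : E →L[ℂ] E) : Prop :=
  ∀ k : ℤ, HasEigenvalue (R : E →ₗ[ℂ] E) (k : ℂ) → k = 0

theorem Nonresonant.neg {R : E →L[ℂ] E} (hR : Nonresonant R) : Nonresonant (-R) := by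
  intro k hk
  obtain ⟨v, hv, hv0⟩ := hk.exists_hasEigenvector
  have hv' : R v = ((-k : ℤ) : ℂ) • v := by
    rw [Int.cast_neg, neg_smul, ← mem_eigenspace_iff.1 hv]
    simp
  exact neg_eq_zero.1 (hR (-k) (hasEigenvalue_of_hasEigenvector ⟨mem_eigenspace_iff.2 hv', hv0⟩))

variable [CompleteSpace E] {t : ℂ} {F : ℂ → E} {M : ℂ → E →L[ℂ] E} {R : E →L[ℂ] E}

theorem Nonresonant.exists_tendsto_nhdsNE (hR : Nonresonant R)
    (hF : ∀ᶠ z in 𝓝[≠] t, HasDerivAt F (M z (F z)) z)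
    (hM : Tendsto (fun z ↦ (z - t) • M z) (𝓝[≠] t) (𝓝 R)) : ∃ c, Tendsto F (𝓝[≠] t) (𝓝 c) := by
  refine tendsto_nhds_of_meromorphicOrderAt_nonneg
    (meromorphicAt_of_hasDerivAt_of_tendsto_sub_smul hF hM) ?_
  by_cases htop : meromorphicOrderAt F t = ⊤
  · simp [htop]
  · rw [← WithTop.coe_untop₀_of_ne_top htop,
      hR _ (hasEigenvalue_meromorphicOrderAt_untop₀ hF hM htop), WithTop.coe_zero]

theorem Nonresonant.exists_tendsto_cobounded (hR : Nonresonant R)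
    (hF : ∀ᶠ z in Bornology.cobounded ℂ, HasDerivAt F (M z (F z)) z)
    (hM : Tendsto (fun z ↦ z • M z) (Bornology.cobounded ℂ) (𝓝 R)) :
    ∃ c, Tendsto F (Bornology.cobounded ℂ) (𝓝 c) := by
  have hinv : ∀ᶠ w in 𝓝[≠] (0 : ℂ), HasDerivAt (fun w ↦ F w⁻¹)
      ((-(w ^ 2)⁻¹ • M w⁻¹) (F w⁻¹)) w := by
    filter_upwards [tendsto_inv₀_nhdsNE_zero.eventually hF, self_mem_nhdsWithin] with w hw hw0
    exact hw.scomp w (hasDerivAt_inv hw0)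
  have hres : Tendsto (fun w : ℂ ↦ (w - 0) • (-(w ^ 2)⁻¹ • M w⁻¹)) (𝓝[≠] 0) (𝓝 (-R)) := by
    refine (hM.comp tendsto_inv₀_nhdsNE_zero).neg.congr' ?_
    filter_upwards [self_mem_nhdsWithin] with w (hw : w ≠ 0)
    rw [Function.comp_apply, smul_smul, ← neg_smul]
    congr 1
    field_simp
    simp
  obtain ⟨c, hc⟩ := hR.neg.exists_tendsto_nhdsNE hinv hres
  exact ⟨c, by simpa [Function.comp_def] using hc.comp tendsto_inv₀_cobounded'⟩

end Nonresonant

section FuchsianEquation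

open Filter Topology

variable {ι V : Type*} [Fintype ι] {t : ι → ℂ}

/-- The coefficient `∑ i, A i / (x - t i)` of a Fuchsian equation with singularities `t i` and
residues `A i`, which may be matrices or operators. At a singularity its own term has the junk
value `0`. -/
noncomputable def fuchsianCoeff [AddCommMonoid V] [Module ℂ V] (t : ι → ℂ) (A : ι → V) (x : ℂ) :
    V :=
  ∑ i, (x - t i)⁻¹ • A i

variable [NormedAddCommGroup V] [NormedSpace ℂ V] (A : ι → V)

theorem tendsto_sub_smul_fuchsianCoeff (ht : Function.Injective t) (i : ι) :
    Tendsto (fun x ↦ (x - t i) • fuchsianCoeff t A x) (𝓝[≠] t i) (𝓝 (A i)) := by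
  classical
  have hterm : ∀ j, Tendsto (fun x ↦ (x - t i) • (x - t j)⁻¹ • A j) (𝓝[≠] t i)
      (𝓝 (if j = i then A j else 0)) := by
    intro j
    split_ifs with hji
    · refine tendsto_const_nhds.congr' ?_
      filter_upwards [self_mem_nhdsWithin] with x hx
      rw [hji, smul_inv_smul₀ (sub_ne_zero.2 hx)]
    · have hne : t i - t j ≠ 0 := sub_ne_zero.2 fun h ↦ hji (ht h.symm)
      have hcont : ContinuousAt (fun x ↦ (x - t i) • (x - t j)⁻¹ • A j) (t i) := by
        fun_prop (disch := assumption)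
      simpa using hcont.tendsto.mono_left nhdsWithin_le_nhds
  simpa [fuchsianCoeff, Finset.smul_sum] using tendsto_finsetSum Finset.univ fun j _ ↦ hterm j

theorem tendsto_smul_fuchsianCoeff_cobounded :
    Tendsto (fun x ↦ x • fuchsianCoeff t A x) (Bornology.cobounded ℂ) (𝓝 (∑ i, A i)) := by
  simp only [fuchsianCoeff, Finset.smul_sum, smul_smul]
  refine tendsto_finsetSum _ fun i _ ↦ ?_
  have hcoeff : Tendsto (fun x ↦ 1 + t i * (x - t i)⁻¹) (Bornology.cobounded ℂ) (𝓝 1) := by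
    simpa using ((tendsto_inv₀_cobounded.comp
      (tendsto_sub_const_cobounded (t i))).const_mul (t i)).const_add 1
  have hcoeff' : Tendsto (fun x ↦ x * (x - t i)⁻¹) (Bornology.cobounded ℂ) (𝓝 1) := by
    refine hcoeff.congr' ?_
    filter_upwards [Bornology.eventually_ne_cobounded (t i)] with x hx
    have := sub_ne_zero.2 hx
    field_simp
    ring
  simpa using hcoeff'.smul_const (A i)

variable {E : Type*} [NormedAddCommGroup E] [NormedSpace ℂ E] [CompleteSpace E] {F : ℂ → E}

theorem eq_of_differentiableOn_compl_finite_of_tendsto {S : Set ℂ} {c : E} (hS : S.Finite)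
    (hF : DifferentiableOn ℂ F Sᶜ) (hlim : ∀ s ∈ S, ∃ c, Tendsto F (𝓝[≠] s) (𝓝 c))
    (hinf : Tendsto F (Bornology.cobounded ℂ) (𝓝 c)) {x : ℂ} (hx : x ∉ S) : F x = c := by
  have hdiff : ∀ z ∉ S, DifferentiableAt ℂ F z := fun z hz ↦
    hF.differentiableAt (hS.isClosed.isOpen_compl.mem_nhds hz)
  have hG : ∀ z, Tendsto F (𝓝[≠] z) (𝓝 (limUnder (𝓝[≠] z) F)) := by
    intro z
    refine tendsto_nhds_limUnder ?_
    by_cases hz : z ∈ S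
    · exact hlim z hz
    · exact ⟨F z, (hdiff z hz).continuousAt.tendsto.mono_left nhdsWithin_le_nhds⟩
  set G : ℂ → E := fun z ↦ limUnder (𝓝[≠] z) F
  have hGF : Set.EqOn G F Sᶜ := fun z hz ↦
    tendsto_nhds_unique (hG z) ((hdiff z hz).continuousAt.tendsto.mono_left nhdsWithin_le_nhds)
  have hnear : ∀ z, ∀ᶠ w in 𝓝[≠] z, w ∉ S := fun z ↦
    nhdsNE_le_cofinite z hS.compl_mem_cofinite
  have hGdiff : Differentiable ℂ G := by
    intro z
    refine (Complex.analyticAt_of_differentiable_on_punctured_nhds_of_continuousAt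
      ?_ ?_).differentiableAt
    · filter_upwards [hnear z] with w hw
      exact (hdiff w hw).congr_of_eventuallyEq
        (hGF.eventuallyEq_of_mem (hS.isClosed.isOpen_compl.mem_nhds hw))
    · rw [continuousAt_iff_punctured_nhds]
      exact (hG z).congr' ((hnear z).mono fun w hw ↦ (hGF hw).symm)
  have hGinf : Tendsto G (cocompact ℂ) (𝓝 c) := by
    rw [← Metric.cobounded_eq_cocompact]
    refine hinf.congr' ?_
    filter_upwards [Bornology.le_cofinite ℂ hS.compl_mem_cofinite] with z hz using (hGF hz).symm
  rw [← hGF hx, hGdiff.apply_eq_of_tendsto_cocompact x hGinf]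

variable {T : ι → E →L[ℂ] E}

theorem exists_eq_const_of_hasDerivAt_fuchsianCoeff (ht : Function.Injective t)
    (hF : ∀ x ∉ Set.range t, HasDerivAt F (fuchsianCoeff t T x (F x)) x)
    (hT : ∀ i, Nonresonant (T i)) (hT_inf : Nonresonant (∑ i, T i)) :
    ∃ c, (∀ x ∉ Set.range t, F x = c) ∧ ∀ i, T i c = 0 := by
  have hnear : ∀ z, ∀ᶠ x in 𝓝[≠] z, x ∉ Set.range t := fun z ↦
    nhdsNE_le_cofinite z (Set.finite_range t).compl_mem_cofinite
  have hlim : ∀ s ∈ Set.range t, ∃ c, Tendsto F (𝓝[≠] s) (𝓝 c) := by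
    rintro _ ⟨i, rfl⟩
    exact (hT i).exists_tendsto_nhdsNE ((hnear _).mono hF) (tendsto_sub_smul_fuchsianCoeff T ht i)
  obtain ⟨c, hinf⟩ : ∃ c, Tendsto F (Bornology.cobounded ℂ) (𝓝 c) :=
    hT_inf.exists_tendsto_cobounded
      (mem_of_superset (Bornology.le_cofinite ℂ (Set.finite_range t).compl_mem_cofinite) hF)
      (tendsto_smul_fuchsianCoeff_cobounded T)
  have hFc : ∀ x ∉ Set.range t, F x = c := fun x hx ↦
    eq_of_differentiableOn_compl_finite_of_tendsto (Set.finite_range t)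
      (fun z hz ↦ (hF z hz).differentiableAt.differentiableWithinAt) hlim hinf hx
  refine ⟨c, hFc, fun i ↦ ?_⟩
  have hcoeff : ∀ x ∉ Set.range t, fuchsianCoeff t T x c = 0 := by
    intro x hx
    have hconst : F =ᶠ[𝓝 x] fun _ ↦ c :=
      mem_of_superset ((Set.finite_range t).isClosed.isOpen_compl.mem_nhds hx) hFc
    rw [← hFc x hx]
    exact (hF x hx).unique ((hasDerivAt_const x c).congr_of_eventuallyEq hconst)
  have hlim_i : Tendsto (fun x ↦ ((x - t i) • fuchsianCoeff t T x) c) (𝓝[≠] t i) (𝓝 (T i c)) :=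
    ((ContinuousLinearMap.apply ℂ E c).continuous.tendsto _).comp
      (tendsto_sub_smul_fuchsianCoeff T ht i)
  refine tendsto_nhds_unique hlim_i (tendsto_const_nhds.congr' ?_)
  filter_upwards [hnear (t i)] with x hx
  simp [hcoeff x hx]

theorem hasDerivAt_fuchsianCoeff_of_isOpen {Ω : Set ℂ} (hΩ : IsOpen Ω) (hΩne : Ω.Nonempty)
    (hΩt : Ω ⊆ (Set.range t)ᶜ) (hF : DifferentiableOn ℂ F (Set.range t)ᶜ)
    (hode : ∀ x ∈ Ω, HasDerivAt F (fuchsianCoeff t T x (F x)) x) :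
    ∀ x ∉ Set.range t, HasDerivAt F (fuchsianCoeff t T x (F x)) x := by
  obtain ⟨x₀, hx₀⟩ := hΩne
  have hU : IsOpen (Set.range t)ᶜ := (Set.finite_range t).isClosed.isOpen_compl
  have hdiff : ∀ x ∉ Set.range t, DifferentiableAt ℂ F x := fun x hx ↦
    hF.differentiableAt (hU.mem_nhds hx)
  have hconn : IsPreconnected (Set.range t)ᶜ :=
    ((Set.finite_range t).countable.isConnected_compl_of_one_lt_rank
      (by simp [Complex.rank_real_complex])).isPreconnected
  have hrhs : DifferentiableOn ℂ (fun x ↦ fuchsianCoeff t T x (F x)) (Set.range t)ᶜ := by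
    intro x hx
    have hx' : ∀ i, x - t i ≠ 0 := fun i ↦ sub_ne_zero.2 fun h ↦ hx ⟨i, h.symm⟩
    have := hdiff x hx
    refine DifferentiableAt.differentiableWithinAt (DifferentiableAt.clm_apply ?_ this)
    exact DifferentiableAt.fun_sum fun i _ ↦ by fun_prop (disch := exact hx' i)
  have heq : Set.EqOn (deriv F) (fun x ↦ fuchsianCoeff t T x (F x)) (Set.range t)ᶜ :=
    ((hF.deriv hU).analyticOnNhd hU).eqOn_of_preconnected_of_eventuallyEq (hrhs.analyticOnNhd hU)
      hconn (hΩt hx₀) (mem_of_superset (hΩ.mem_nhds hx₀) fun x hx ↦ (hode x hx).deriv)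
  exact fun x hx ↦ (hdiff x hx).hasDerivAt.congr_deriv (heq hx)

end FuchsianEquation

section Sylvester

variable {K m n : Type*} [Fintype m] [Fintype n]

/-- The linear map `V ↦ B * V - V * A` on rectangular matrices, whose kernel consists of the
intertwiners of `A` and `B`. -/
def sylvesterMap [CommRing K] (A : Matrix n n K) (B : Matrix m m K) :
    Matrix m n K →ₗ[K] Matrix m n K :=
  mulLeftLinearMap n K B - mulRightLinearMap m K A

theorem sylvesterMap_apply [CommRing K] (A : Matrix n n K) (B : Matrix m m K) (V : Matrix m n K) :
    sylvesterMap A B V = B * V - V * A :=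
  rfl

variable [DecidableEq m] [DecidableEq n]

theorem aeval_mul_eq_mul_aeval_of_mul_eq_mul [CommRing K] {A : Matrix n n K} {B : Matrix m m K}
    {V : Matrix m n K} (h : B * V = V * A) (p : K[X]) : aeval B p * V = V * aeval A p := by
  induction p using Polynomial.induction_on' with
  | add p q hp hq => rw [map_add, map_add, Matrix.add_mul, Matrix.mul_add, hp, hq]
  | monomial k a =>
    have hpow : B ^ k * V = V * A ^ k := by
      induction k with
      | zero => simp
      | succ k ih =>
        rw [pow_succ, pow_succ, Matrix.mul_assoc, h, ← Matrix.mul_assoc, ih, Matrix.mul_assoc]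
    simp [aeval_monomial, ← Algebra.smul_def, hpow]

variable [Field K] [IsAlgClosed K] {A : Matrix n n K} {B : Matrix m m K}

theorem eq_zero_of_mul_eq_mul_of_disjoint_spectrum {V : Matrix m n K} (h : B * V = V * A)
    (hAB : Disjoint (spectrum K A) (spectrum K B)) : V = 0 := by
  have hunit : IsUnit (aeval B A.charpoly) := by
    by_contra hB
    rw [(IsAlgClosed.splits A.charpoly).eq_prod_roots_of_monic A.charpoly_monic] at hB
    obtain ⟨μ, hμB, hμA⟩ := spectrum.exists_mem_of_not_isUnit_aeval_prod hB
    exact hAB.notMem_of_mem_right hμB (mem_spectrum_of_isRoot_charpoly hμA)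
  have hzero : aeval B A.charpoly * V = 0 := by
    rw [aeval_mul_eq_mul_aeval_of_mul_eq_mul h, aeval_self_charpoly, Matrix.mul_zero]
  rw [← nonsing_inv_mul_cancel_left _ V ((isUnit_iff_isUnit_det _).1 hunit), hzero,
    Matrix.mul_zero]

theorem exists_sub_eq_of_hasEigenvalue_sylvesterMap {r : K}
    (hr : Module.End.HasEigenvalue (sylvesterMap A B) r) :
    ∃ μ ∈ spectrum K A, ∃ ν ∈ spectrum K B, ν - μ = r := by
  obtain ⟨V, hV, hV0⟩ := hr.exists_hasEigenvector
  have hinter : B * V = V * (algebraMap K _ r + A) := by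
    rw [Module.End.mem_eigenspace_iff, sylvesterMap_apply, sub_eq_iff_eq_add] at hV
    simp [hV, Matrix.mul_add, Algebra.algebraMap_eq_smul_one]
  obtain ⟨ν, hνA, hνB⟩ := Set.not_disjoint_iff.1
    (mt (eq_zero_of_mul_eq_mul_of_disjoint_spectrum hinter) hV0)
  rw [← spectrum.singleton_add_eq, Set.singleton_add] at hνA
  obtain ⟨μ, hμ, rfl⟩ := hνA
  exact ⟨μ, hμ, r + μ, hνB, add_sub_cancel_right r μ⟩

end Sylvester

section MonomialMatrix

variable {K n : Type*} [Fintype n] [DecidableEq n]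

theorem eq_diagonal_mul_permMatrix_of_mul_eq_mul [CommRing K] [IsDomain K] {θ : n → K}
    (hθ : Function.Injective θ) {σ : Equiv.Perm n} {V : Matrix n n K}
    (h : diagonal (θ ∘ σ) * V = V * diagonal θ) :
    V = diagonal (fun i ↦ V i (σ i)) * σ.permMatrix K := by
  ext i j
  by_cases hij : σ i = j
  · simp [hij, PEquiv.toMatrix_apply]
  · have hentry : θ (σ i) * V i j = V i j * θ j := by
      simpa using congr_fun₂ h i j
    have hne : θ (σ i) - θ j ≠ 0 := sub_ne_zero.2 (hθ.ne hij)
    simpa [hij, PEquiv.toMatrix_apply] using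
      mul_left_cancel₀ hne (b := V i j) (c := 0) (by linear_combination hentry)

theorem exists_diagonal_mul_permMatrix_conj [Field K] {ι : Type*} {A B : ι → Matrix n n K}
    {V : Matrix n n K} (hV : IsUnit V) (h : ∀ i, B i * V = V * A i) {d : n → K} {σ : Equiv.Perm n}
    (hVd : V = diagonal d * σ.permMatrix K) (j₀ : n) :
    ∃ d : n → K, (∀ j, d j ≠ 0) ∧ d j₀ = 1 ∧
      ∀ i, B i = diagonal d * σ.permMatrix K * A i * (diagonal d * σ.permMatrix K)⁻¹ := by
  have hd : ∀ j, d j ≠ 0 := by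
    have hdet := ((isUnit_iff_isUnit_det V).1 hV).ne_zero
    rw [hVd, det_mul, det_diagonal] at hdet
    exact fun j ↦ Finset.prod_ne_zero_iff.1 (left_ne_zero_of_mul hdet) j (Finset.mem_univ j)
  have hscale : diagonal ((d j₀)⁻¹ • d) * σ.permMatrix K = (d j₀)⁻¹ • V := by
    rw [hVd, diagonal_smul, smul_mul]
  have hunit : IsUnit ((d j₀)⁻¹ • V).det := by
    rw [det_smul]
    exact ((inv_ne_zero (hd j₀)).isUnit.pow _).mul ((isUnit_iff_isUnit_det V).1 hV)
  refine ⟨(d j₀)⁻¹ • d, fun j ↦ mul_ne_zero (inv_ne_zero (hd j₀)) (hd j),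
    inv_mul_cancel₀ (hd j₀), fun i ↦ ?_⟩
  rw [hscale, smul_mul, ← h i, ← Matrix.mul_smul, mul_nonsing_inv_cancel_right _ _ hunit]

end MonomialMatrix

section FuchsianSystem

theorem hasDerivAt_matrix_mul {𝕜 l m n : Type*} [NontriviallyNormedField 𝕜] [Finite l]
    [Fintype m] [Finite n] {Z : 𝕜 → Matrix l m 𝕜} {Y : 𝕜 → Matrix m n 𝕜} {Z' : Matrix l m 𝕜}
    {Y' : Matrix m n 𝕜} {x : 𝕜} (hZ : HasDerivAt Z Z' x) (hY : HasDerivAt Y Y' x) :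
    HasDerivAt (fun x ↦ Z x * Y x) (Z' * Y x + Z x * Y') x := by
  have := Fintype.ofFinite l
  have := Fintype.ofFinite n
  refine hasDerivAt_pi.2 fun i ↦ hasDerivAt_pi.2 fun j ↦ ?_
  simpa [Matrix.mul_apply, Finset.sum_add_distrib] using HasDerivAt.fun_sum fun k _ ↦
    (hasDerivAt_pi.1 (hasDerivAt_pi.1 hZ i) k).mul (hasDerivAt_pi.1 (hasDerivAt_pi.1 hY k) j)

variable {ι m n : Type*} [Fintype ι] [Fintype m] [Fintype n] {t : ι → ℂ}

theorem fuchsianCoeff_sylvesterMap_apply (t : ι → ℂ) (A : ι → Matrix n n ℂ) (B : ι → Matrix m m ℂ)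
    (x : ℂ) (V : Matrix m n ℂ) :
    fuchsianCoeff t (fun i ↦ (sylvesterMap (A i) (B i)).toContinuousLinearMap) x V =
      sylvesterMap (fuchsianCoeff t A x) (fuchsianCoeff t B x) V := by
  simp [fuchsianCoeff, sylvesterMap_apply, Matrix.sum_mul, Matrix.mul_sum, smul_sub]

theorem sum_sylvesterMap (A : ι → Matrix n n ℂ) (B : ι → Matrix m m ℂ) :
    ∑ i, (sylvesterMap (A i) (B i)).toContinuousLinearMap =
      (sylvesterMap (∑ i, A i) (∑ i, B i)).toContinuousLinearMap := by
  ext1 V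
  simp [sylvesterMap_apply, Matrix.sum_mul, Matrix.mul_sum]

variable [DecidableEq m] [DecidableEq n]

/-- Two residues form a nonresonant pair when the only integer among the differences of their
eigenvalues is `0`. Taking `A = B` gives the usual nonresonance of a single residue. -/
def NonresonantPair (A : Matrix n n ℂ) (B : Matrix m m ℂ) : Prop :=
  ∀ μ ∈ spectrum ℂ A, ∀ ν ∈ spectrum ℂ B, ∀ k : ℤ, ν - μ = k → k = 0

theorem NonresonantPair.nonresonant_sylvesterMap {A : Matrix n n ℂ} {B : Matrix m m ℂ}
    (h : NonresonantPair A B) :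
    Nonresonant (sylvesterMap A B).toContinuousLinearMap := by
  intro k hk
  obtain ⟨μ, hμ, ν, hν, hk⟩ := exists_sub_eq_of_hasEigenvalue_sylvesterMap hk
  exact h μ hμ ν hν k hk

/-- A fundamental matrix on `Ω` of the Fuchsian system `Y' = (∑ i, A i / (x - t i)) Y`. -/
def IsFundamentalMatrixOn (t : ι → ℂ) (A : ι → Matrix n n ℂ) (Ω : Set ℂ) (Y : ℂ → Matrix n n ℂ) :
    Prop :=
  ∀ x ∈ Ω, IsUnit (Y x) ∧ HasDerivAt Y (fuchsianCoeff t A x * Y x) x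

theorem isFundamentalMatrixOn_of_deriv_eq {A : ι → Matrix n n ℂ} {Ω : Set ℂ} (hΩ : IsOpen Ω)
    {Y : ℂ → Matrix n n ℂ} (hYd : DifferentiableOn ℂ Y Ω) (hYu : ∀ x ∈ Ω, IsUnit (Y x))
    (hYode : ∀ x ∈ Ω, deriv Y x = fuchsianCoeff t A x * Y x) : IsFundamentalMatrixOn t A Ω Y :=
  fun x hx ↦
    ⟨hYu x hx, (hYd.differentiableAt (hΩ.mem_nhds hx)).hasDerivAt.congr_deriv (hYode x hx)⟩

variable {A B : ι → Matrix n n ℂ}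

theorem hasDerivAt_sylvesterMap_of_mul_eq {Ω : Set ℂ} (hΩ : IsOpen Ω) {F Y Z : ℂ → Matrix n n ℂ}
    (hY : IsFundamentalMatrixOn t A Ω Y) (hZ : IsFundamentalMatrixOn t B Ω Z)
    (hF : DifferentiableOn ℂ F Ω) (hFYZ : ∀ x ∈ Ω, F x * Y x = Z x) {x : ℂ} (hx : x ∈ Ω) :
    HasDerivAt F (sylvesterMap (fuchsianCoeff t A x) (fuchsianCoeff t B x) (F x)) x := by
  have hFx := (hF.differentiableAt (hΩ.mem_nhds hx)).hasDerivAt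
  -- Differentiating `F * Y = Z` avoids the derivative of the inverse of `Y`.
  refine hFx.congr_deriv ((hY x hx).1.mul_left_injective ?_)
  have hprod := (hasDerivAt_matrix_mul hFx (hY x hx).2).unique
    ((hZ x hx).2.congr_of_eventuallyEq (Filter.mem_of_superset (hΩ.mem_nhds hx) hFYZ))
  dsimp only
  rw [sylvesterMap_apply, Matrix.sub_mul, Matrix.mul_assoc _ (F x), hFYZ x hx, Matrix.mul_assoc,
    ← hprod, add_sub_cancel_right]

theorem exists_isUnit_mul_eq_mul_of_eq_mul_inv (ht : Function.Injective t)
    (hres : ∀ i, NonresonantPair (A i) (B i)) (hres_inf : NonresonantPair (∑ i, A i) (∑ i, B i))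
    {Ω : Set ℂ} (hΩ : IsOpen Ω) (hΩne : Ω.Nonempty) (hΩt : Ω ⊆ (Set.range t)ᶜ)
    {F Y Z : ℂ → Matrix n n ℂ}
    (hY : IsFundamentalMatrixOn t A Ω Y) (hZ : IsFundamentalMatrixOn t B Ω Z)
    (hF : DifferentiableOn ℂ F (Set.range t)ᶜ) (hFYZ : ∀ x ∈ Ω, F x = Z x * (Y x)⁻¹) :
    ∃ V : Matrix n n ℂ, IsUnit V ∧ ∀ i, B i * V = V * A i := by
  have : CompleteSpace (Matrix n n ℂ) := FiniteDimensional.complete ℂ _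
  have hFmul : ∀ x ∈ Ω, F x * Y x = Z x := fun x hx ↦ by
    rw [hFYZ x hx, nonsing_inv_mul_cancel_right _ _ ((isUnit_iff_isUnit_det _).1 (hY x hx).1)]
  have hode := hasDerivAt_fuchsianCoeff_of_isOpen hΩ hΩne hΩt hF fun x hx ↦
    (hasDerivAt_sylvesterMap_of_mul_eq hΩ hY hZ (hF.mono hΩt) hFmul hx).congr_deriv
      (fuchsianCoeff_sylvesterMap_apply t A B x (F x)).symm
  obtain ⟨V, hFV, hV⟩ := exists_eq_const_of_hasDerivAt_fuchsianCoeff ht hode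
    (fun i ↦ (hres i).nonresonant_sylvesterMap)
    (sum_sylvesterMap A B ▸ hres_inf.nonresonant_sylvesterMap)
  obtain ⟨x, hx⟩ := hΩne
  refine ⟨V, ?_, fun i ↦ sub_eq_zero.1 (hV i)⟩
  rw [← hFV x (hΩt hx), hFYZ x hx]
  exact (hZ x hx).1.mul (isUnit_nonsing_inv_iff.2 (hY x hx).1)

theorem nonresonantPair_neg_diagonal {θ : n → ℂ} (hθ : ∀ j k, ∀ m : ℤ, θ j - θ k = m → j = k)
    (σ : Equiv.Perm n) : NonresonantPair (-diagonal θ) (-diagonal (θ ∘ σ)) := by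
  intro μ hμ ν hν m hm
  simp only [diagonal_neg, spectrum_diagonal] at hμ hν
  obtain ⟨j, rfl⟩ := hμ
  obtain ⟨k, rfl⟩ := hν
  have := hθ j (σ k) m (by simpa [sub_eq_add_neg, add_comm] using hm)
  simpa [this, eq_comm] using hm

theorem fuchsian_system_uniqueness_general (ht : Function.Injective t)
    (hres : ∀ i, NonresonantPair (A i) (B i))
    {θ : n → ℂ} (hθ : ∀ j k, ∀ m : ℤ, θ j - θ k = m → j = k) {σ : Equiv.Perm n}
    (hA : -(∑ i, A i) = diagonal θ) (hB : -(∑ i, B i) = diagonal (θ ∘ σ))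
    {Ω : Set ℂ} (hΩ : IsOpen Ω) (hΩne : Ω.Nonempty) (hΩt : Ω ⊆ (Set.range t)ᶜ)
    {F Y Z : ℂ → Matrix n n ℂ}
    (hY : IsFundamentalMatrixOn t A Ω Y) (hZ : IsFundamentalMatrixOn t B Ω Z)
    (hF : DifferentiableOn ℂ F (Set.range t)ᶜ) (hFYZ : ∀ x ∈ Ω, F x = Z x * (Y x)⁻¹) (j₀ : n) :
    ∃ d : n → ℂ, (∀ j, d j ≠ 0) ∧ d j₀ = 1 ∧
      ∀ i, B i = diagonal d * σ.permMatrix ℂ * A i * (diagonal d * σ.permMatrix ℂ)⁻¹ := by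
  obtain ⟨V, hV, hAB⟩ := exists_isUnit_mul_eq_mul_of_eq_mul_inv ht hres
    (by simpa [neg_eq_iff_eq_neg.1 hA, neg_eq_iff_eq_neg.1 hB] using
      nonresonantPair_neg_diagonal hθ σ) hΩ hΩne hΩt hY hZ hF hFYZ
  have hinf : diagonal (θ ∘ σ) * V = V * diagonal θ := by
    rw [← hA, ← hB]
    simp [Matrix.sum_mul, Matrix.mul_sum, hAB]
  have hθ_inj : Function.Injective θ := fun j k hjk ↦ hθ j k 0 (by simp [hjk])
  exact exists_diagonal_mul_permMatrix_conj hV hAB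
    (eq_diagonal_mul_permMatrix_of_mul_eq_mul hθ_inj hinf) j₀

end FuchsianSystem

section FinTwo

theorem nonresonantPair_of_charpoly_eq {n : Type*} [Fintype n] [DecidableEq n]
    {A B : Matrix n n ℂ} {p q : ℂ} (hA : A.charpoly = (X - C p) * (X - C q))
    (hB : B.charpoly = (X - C p) * (X - C q)) (hpq : ∀ k : ℤ, p - q ≠ k) :
    NonresonantPair A B := by
  have hroots : ∀ {D : Matrix n n ℂ} {μ : ℂ}, D.charpoly = (X - C p) * (X - C q) →
      μ ∈ spectrum ℂ D → μ = p ∨ μ = q := fun hD hμ ↦ by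
    simpa [mem_spectrum_iff_isRoot_charpoly, hD, sub_eq_zero] using hμ
  intro μ hμ ν hν k hk
  rcases hroots hA hμ with rfl | rfl <;> rcases hroots hB hν with rfl | rfl
  · simpa [eq_comm] using hk
  · exact absurd (by simp [← hk]) (hpq (-k))
  · exact absurd hk (hpq k)
  · simpa [eq_comm] using hk

theorem eq_of_vec_sub_vec_eq_intCast {R : Type*} [AddGroupWithOne R] {p q : R}
    (hpq : ∀ k : ℤ, p - q ≠ k) (j k : Fin 2) (m : ℤ) (h : ![p, q] j - ![p, q] k = m) : j = k := by
  fin_cases j <;> fin_cases k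
  · rfl
  · exact absurd h (hpq m)
  · exact absurd (by simp [← h]) (hpq (-m))
  · rfl

theorem diagonal_mul_permMatrix_fin_two {K : Type*} [Semiring K] {d : Fin 2 → K} (hd : d 0 = 1)
    (σ : Equiv.Perm (Fin 2)) : diagonal d * σ.permMatrix K = diagonal ![1, d 1] ∨
      diagonal d * σ.permMatrix K = !![0, 1; d 1, 0] := by
  obtain rfl | rfl : σ = 1 ∨ σ = Equiv.swap 0 1 := by decide +revert
  · left
    ext i j
    fin_cases i <;> fin_cases j <;> simp [hd]
  · right
    ext i j
    fin_cases i <;> fin_cases j <;> simp [hd, PEquiv.toMatrix_apply]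

end FinTwo

/-- Uniqueness of non-resonant Fuchsian systems with prescribed singularities,
exponents and monodromy, normalized at infinity: the two systems are conjugate
by a diagonal or antidiagonal constant matrix. -/
theorem fuchsian_system_uniqueness (n : ℕ) (t : Fin (n + 2) → ℂ)
    (ht : Function.Injective t)
    (A B : Fin (n + 2) → Matrix (Fin 2) (Fin 2) ℂ)
    (θp θm : Fin (n + 2) → ℂ)
    -- `A i` and `B i` have the same eigenvalues `θp i`, `θm i`
    (hAev : ∀ i, (A i).charpoly = (X - C (θp i)) * (X - C (θm i)))
    (hBev : ∀ i, (B i).charpoly = (X - C (θp i)) * (X - C (θm i)))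
    -- non-resonance at the finite singularities
    (hres : ∀ i, ∀ m : ℤ, θp i - θm i ≠ (m : ℂ))
    -- residues at infinity: both diagonal, with the same distinct eigenvalues
    (θpinf θminf : ℂ) (hinfne : θpinf ≠ θminf)
    (hresinf : ∀ m : ℤ, θpinf - θminf ≠ (m : ℂ))
    (hAinf : -(∑ i, A i) = Matrix.diagonal ![θpinf, θminf])
    (hBinf : -(∑ i, B i) = Matrix.diagonal ![θpinf, θminf] ∨
             -(∑ i, B i) = Matrix.diagonal ![θminf, θpinf])
    -- fundamental matrix solutions on a common domain
    (Ω : Set ℂ) (hΩo : IsOpen Ω) (hΩne : Ω.Nonempty)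
    (hΩconn : IsConnected Ω) (hΩS : ∀ x ∈ Ω, ∀ i, x ≠ t i)
    (Y Z : ℂ → Matrix (Fin 2) (Fin 2) ℂ)
    (hYd : DifferentiableOn ℂ Y Ω) (hZd : DifferentiableOn ℂ Z Ω)
    (hYu : ∀ x ∈ Ω, IsUnit (Y x)) (hZu : ∀ x ∈ Ω, IsUnit (Z x))
    (hYode : ∀ x ∈ Ω, deriv Y x = (∑ i, (x - t i)⁻¹ • A i) * Y x)
    (hZode : ∀ x ∈ Ω, deriv Z x = (∑ i, (x - t i)⁻¹ • B i) * Z x)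
    -- identical monodromy: `Z·Y⁻¹` is the restriction of a single-valued
    -- holomorphic function on the complement of the singularities
    (hmono : ∃ F : ℂ → Matrix (Fin 2) (Fin 2) ℂ,
        DifferentiableOn ℂ F {x : ℂ | ∀ i, x ≠ t i} ∧
        ∀ x ∈ Ω, F x = Z x * (Y x)⁻¹) :
    ∃ ξ : ℂ, ξ ≠ 0 ∧ ∃ Cc : Matrix (Fin 2) (Fin 2) ℂ,
      (Cc = Matrix.diagonal ![1, ξ] ∨ Cc = !![0, 1; ξ, 0]) ∧
      ∀ i, B i = Cc * A i * Cc⁻¹ := by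
  have hS : {x : ℂ | ∀ i, x ≠ t i} = (Set.range t)ᶜ := by
    ext x
    simp [eq_comm]
  obtain ⟨σ, hσ⟩ : ∃ σ : Equiv.Perm (Fin 2),
      -(∑ i, B i) = diagonal (![θpinf, θminf] ∘ σ) := by
    rcases hBinf with hB | hB
    · exact ⟨1, hB⟩
    · refine ⟨Equiv.swap 0 1, hB.trans (congrArg _ ?_)⟩
      ext j
      fin_cases j <;> rfl
  obtain ⟨F, hF, hFYZ⟩ := hmono
  obtain ⟨d, hd, hd0, hconj⟩ := fuchsian_system_uniqueness_general ht
    (fun i ↦ nonresonantPair_of_charpoly_eq (hAev i) (hBev i) (hres i))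
    (eq_of_vec_sub_vec_eq_intCast hresinf) hAinf hσ hΩo hΩne (hS ▸ hΩS)
    (isFundamentalMatrixOn_of_deriv_eq hΩo hYd hYu hYode)
    (isFundamentalMatrixOn_of_deriv_eq hΩo hZd hZu hZode) (hS ▸ hF) hFYZ 0
  exact ⟨d 1, hd 1, _, diagonal_mul_permMatrix_fin_two hd0 σ, hconj⟩
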